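/- arXiv:2111.07399 — 2 statements merged into one kernel-verified Lean document; each statement's English description precedes it below -/
import Mathlib

section
/- Let G be a connected graph on ℕ with uniformly bounded degree which is non-singular (the bounded adjacency operator A on ℓ²(ℕ), (A v)_k = ∑_i a_{ki} v_i, has trivial kernel). If f : ℓ²(ℕ) → ℓ²(ℕ) is a continuous linear map satisfying f(v ∘ w) = f(v) ⋆ f(w) for all v, w ∈ ℓ²(ℕ), then either f is the zero map or f is injective. -/
/-!
Write `F j = f (δ_j)`. If `w j = 0` then `w ∘ δ_j = 0`, so `A (f w · F j) = 0`, where `A` is the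
adjacency operator and `·` the pointwise product; non-singularity gives `f w · F j = 0`
pointwise. Applied to `w = v - v_j δ_j` this yields
`f v · F j = v_j (F j)²` (`map_mul_map_delta`), so `f v = 0` forces `v_j = 0` or `F j = 0`.

If no `F j` vanishes, `f` is injective. If `F i = 0`, then `f (δ_i ∘ δ_i) = F i ⋆ F i = 0`, and
the coordinate of `δ_i ∘ δ_i` at each neighbour `k` of `i` is `1 / deg i ≠ 0`, so `F k = 0`.
By connectedness every `F k` vanishes, and `f = 0` by density of the finitely supported sequences.
-/

noncomputable section
open scoped ENNReal

/-- The real Hilbert space ℓ²(ℕ) of square-summable sequences. -/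
abbrev l2 : Type := lp (fun _ : ℕ => ℝ) 2

/-- The degree of vertex `i` in the graph with adjacency coefficients `a`. -/
def deg (a : ℕ → ℕ → ℝ) (i : ℕ) : ℝ := ∑' k, a k i

/-- `a` is the adjacency function of a simple graph (0/1-valued, symmetric, no loops). -/
def SimpleAdj (a : ℕ → ℕ → ℝ) : Prop :=
  (∀ k i, a k i = 0 ∨ a k i = 1) ∧ (∀ k i, a k i = a i k) ∧ (∀ i, a i i = 0)

/-- The graph is connected: any two vertices are joined by a finite path of edges. -/
def Connected (a : ℕ → ℕ → ℝ) : Prop :=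
  ∀ i j : ℕ, Relation.ReflTransGen (fun x y => a x y = 1) i j

/-- The graph is locally finite: every degree series converges. -/
def GraphLocallyFinite (a : ℕ → ℕ → ℝ) : Prop := ∀ i, Summable fun k => a k i

/-- The graph has uniformly bounded degree. -/
def UnifBoundedDegree (a : ℕ → ℕ → ℝ) : Prop := ∃ M > 0, ∀ i, deg a i ≤ M

/-- The graph is regular: all degrees are equal. -/
def GraphRegular (a : ℕ → ℕ → ℝ) : Prop := ∃ d : ℝ, ∀ i, deg a i = d

/-- The graph is biregular: the vertex set splits as `V₁ ⊔ V₂` with every edge joining `V₁`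
to `V₂` and constant degrees `d₁` on `V₁` and `d₂` on `V₂`. -/
def GraphBiregular (a : ℕ → ℕ → ℝ) : Prop :=
  ∃ (V₁ : Set ℕ) (d₁ d₂ : ℝ),
    (∀ i ∈ V₁, deg a i = d₁) ∧ (∀ i ∉ V₁, deg a i = d₂) ∧
    ∀ i k, a k i = 1 → ((i ∈ V₁ ∧ k ∉ V₁) ∨ (i ∉ V₁ ∧ k ∈ V₁))

/-- `p` is the product `v ⋆ w` in the Hilbert evolution algebra `A(G)`:
`p_k = ∑_i v_i w_i a_{ki}` with all series convergent. -/
def IsStarProd (a : ℕ → ℕ → ℝ) (v w p : l2) : Prop :=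
  (∀ k, Summable fun i => v i * w i * a k i) ∧
  ∀ k, p k = ∑' i, v i * w i * a k i

/-- `p` is the product `v ∘ w` in the Hilbert evolution algebra `A_RW(G)`:
`p_k = ∑_i v_i w_i a_{ki}/deg(i)` with all series convergent. -/
def IsRWProd (a : ℕ → ℕ → ℝ) (v w p : l2) : Prop :=
  (∀ k, Summable fun i => v i * w i * (a k i / deg a i)) ∧
  ∀ k, p k = ∑' i, v i * w i * (a k i / deg a i)

/-- The graph is non-singular: the adjacency operator `(A v)_k = ∑_i a_{ki} v_i` on ℓ²(ℕ)
has trivial kernel. -/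
def NonSingular (a : ℕ → ℕ → ℝ) : Prop :=
  ∀ v : l2, (∀ k, ∑' i, a k i * v i = 0) → v = 0

/-- The standard orthonormal basis vector `δ_i` of ℓ²(ℕ). -/
def delta (i : ℕ) : l2 := lp.single 2 i (1 : ℝ)

theorem memlp_two_of_summable_abs {u : ℕ → ℝ} (hu : Summable fun i => |u i|) :
    Memℓp u 2 := by
  have h1 : Memℓp u 1 := by
    apply memℓp_gen
    simpa using hu
  exact h1.of_exponent_ge (by norm_num)

theorem summable_abs_mul (x y : l2) : Summable fun i => |x i * y i| := by
  have h := lp.summable_inner (𝕜 := ℝ) x y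
  have h2 := h.abs
  refine h2.congr fun i => ?_
  simp [mul_comm]

theorem adj_nonneg {a : ℕ → ℕ → ℝ} (hadj : SimpleAdj a) (k i : ℕ) : 0 ≤ a k i := by
  rcases hadj.1 k i with h | h <;> simp [h]

/-- Bounded degree makes the adjacency operator bounded on `ℓ¹`, and pointwise products of `ℓ²`
sequences are in `ℓ¹`, so the product `x ⋆ y` exists in `ℓ²`. -/
theorem exists_isStarProd {a : ℕ → ℕ → ℝ} (hadj : SimpleAdj a)
    (hlf : GraphLocallyFinite a) (hubd : UnifBoundedDegree a) (x y : l2) :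
    ∃ q : l2, IsStarProd a x y q := by
  obtain ⟨M, hM, hdeg⟩ := hubd
  have hxy := summable_abs_mul x y
  have hnn := adj_nonneg hadj
  have hprod : Summable fun z : ℕ × ℕ => |x z.1 * y z.1| * a z.2 z.1 := by
    rw [summable_prod_of_nonneg (fun z => mul_nonneg (abs_nonneg _) (hnn _ _))]
    refine ⟨fun i => (hlf i).mul_left |x i * y i|, ?_⟩
    refine Summable.of_nonneg_of_le
      (fun i => tsum_nonneg fun k => mul_nonneg (abs_nonneg _) (hnn _ _))
      (fun i => ?_) (hxy.mul_right M)
    simp only [tsum_mul_left]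
    exact mul_le_mul_of_nonneg_left (hdeg i) (abs_nonneg _)
  have hswap := hprod.prod_symm
  have habs : ∀ k, Summable fun i => |x i * y i * a k i| := fun k => by
    refine (hswap.prod_factor k).congr fun i => ?_
    simp [abs_mul, abs_of_nonneg (hnn k i)]
  have hsum : Summable fun k => |∑' i, x i * y i * a k i| := by
    refine Summable.of_nonneg_of_le (fun k => abs_nonneg _) (fun k => ?_) hswap.prod
    have := norm_tsum_le_tsum_norm (f := fun i => x i * y i * a k i) (habs k)
    refine this.trans (le_of_eq (tsum_congr fun i => ?_))
    simp [abs_mul, abs_of_nonneg (hnn k i)]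
  exact ⟨⟨_, memlp_two_of_summable_abs hsum⟩, fun k => (habs k).of_abs, fun k => rfl⟩

theorem delta_apply_self (i : ℕ) : delta i i = 1 := by
  simp [delta]

theorem delta_apply_of_ne {i j : ℕ} (h : j ≠ i) : delta i j = 0 := by
  simp [delta, h]

theorem map_mul_map_delta_of_apply_eq_zero {a : ℕ → ℕ → ℝ} (hadj : SimpleAdj a)
    (hlf : GraphLocallyFinite a) (hubd : UnifBoundedDegree a) (hns : NonSingular a)
    (f : l2 →L[ℝ] l2)
    (hf : ∀ v w p q : l2, IsRWProd a v w p → IsStarProd a (f v) (f w) q → f p = q)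
    (w : l2) (j : ℕ) (hw : w j = 0) (n : ℕ) : f w n * f (delta j) n = 0 := by
  obtain ⟨q, hq⟩ := exists_isStarProd hadj hlf hubd (f w) (f (delta j))
  have hzero : ∀ i, w i * delta j i = 0 := fun i => by
    by_cases h : i = j
    · simp [h, hw]
    · simp [delta_apply_of_ne h]
  have hq0 : f 0 = q := hf w (delta j) 0 q (by constructor <;> simp [hzero, summable_zero]) hq
  rw [map_zero] at hq0
  let u : l2 := ⟨fun i => f w i * f (delta j) i,
    memlp_two_of_summable_abs (summable_abs_mul _ _)⟩
  have hu : u = 0 := hns u fun k => by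
    have h := hq.2 k
    rw [← hq0] at h
    simp only [lp.coeFn_zero, Pi.zero_apply] at h
    rw [h]
    exact tsum_congr fun i => mul_comm _ _
  have := congrArg (fun z : l2 => z n) hu
  simpa [u] using this

theorem map_mul_map_delta {a : ℕ → ℕ → ℝ} (hadj : SimpleAdj a)
    (hlf : GraphLocallyFinite a) (hubd : UnifBoundedDegree a) (hns : NonSingular a)
    (f : l2 →L[ℝ] l2)
    (hf : ∀ v w p q : l2, IsRWProd a v w p → IsStarProd a (f v) (f w) q → f p = q)
    (v : l2) (j n : ℕ) : f v n * f (delta j) n = v j * f (delta j) n ^ 2 := by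
  have h := map_mul_map_delta_of_apply_eq_zero hadj hlf hubd hns f hf (v - v j • delta j) j
    (by
      change v j - v j * delta j j = 0
      rw [delta_apply_self]
      ring) n
  simp only [map_sub, map_smul, lp.coeFn_sub, lp.coeFn_smul, Pi.sub_apply, Pi.smul_apply,
    smul_eq_mul] at h
  linear_combination h

/-- A kernel vector of `f` vanishes at every `j` with `f (δ_j) ≠ 0`. -/
theorem map_delta_eq_zero_of_map_eq_zero {a : ℕ → ℕ → ℝ} (hadj : SimpleAdj a)
    (hlf : GraphLocallyFinite a) (hubd : UnifBoundedDegree a) (hns : NonSingular a)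
    (f : l2 →L[ℝ] l2)
    (hf : ∀ v w p q : l2, IsRWProd a v w p → IsStarProd a (f v) (f w) q → f p = q)
    (v : l2) (hv : f v = 0) (j : ℕ) (hj : v j ≠ 0) : f (delta j) = 0 := by
  ext n
  have h := map_mul_map_delta hadj hlf hubd hns f hf v j n
  simpa [hv, hj] using h

theorem map_delta_eq_zero_of_adj {a : ℕ → ℕ → ℝ} (hadj : SimpleAdj a)
    (hlf : GraphLocallyFinite a) (hubd : UnifBoundedDegree a) (hns : NonSingular a)
    (f : l2 →L[ℝ] l2)
    (hf : ∀ v w p q : l2, IsRWProd a v w p → IsStarProd a (f v) (f w) q → f p = q)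
    {i k : ℕ} (hik : a i k = 1) (hi : f (delta i) = 0) : f (delta k) = 0 := by
  have hki : a k i = 1 := by rw [hadj.2.1, hik]
  have hnn := adj_nonneg hadj
  have hdeg : 0 < deg a i := (hlf i).tsum_pos (fun m => hnn m i) k (by simp [hki])
  -- `c` is `δ_i ∘ δ_i`, the `i`-th column of the transition matrix.
  let c : l2 := ⟨fun m => a m i / deg a i, memlp_two_of_summable_abs (by
    refine ((hlf i).div_const (deg a i)).congr fun m => ?_
    rw [abs_of_nonneg (div_nonneg (hnn m i) hdeg.le)])⟩
  have hsum : ∀ m, HasSum (fun l => delta i l * delta i l * (a m l / deg a l))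
      (a m i / deg a i) := fun m => by
    have h := hasSum_single (f := fun l => delta i l * delta i l * (a m l / deg a l)) i
      (fun l hl => by simp [delta_apply_of_ne hl])
    simpa [delta_apply_self] using h
  have hc : f c = 0 := hf (delta i) (delta i) c 0
    ⟨fun m => (hsum m).summable, fun m => (hsum m).tsum_eq.symm⟩
    (by constructor <;> simp [hi, summable_zero])
  refine map_delta_eq_zero_of_map_eq_zero hadj hlf hubd hns f hf c hc k ?_
  change a k i / deg a i ≠ 0
  rw [hki]
  exact (one_div_pos.mpr hdeg).ne'

/-- for a connected non-singular graph with uniformly bounded degree, every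
continuous linear map `f : ℓ² → ℓ²` satisfying `f(v ∘ w) = f(v) ⋆ f(w)` (a homomorphism of
Hilbert evolution algebras from `A_RW(G)` to `A(G)`) is either the zero map or injective. -/
theorem homomorphism_zero_or_injective
    (a : ℕ → ℕ → ℝ)
    (hadj : SimpleAdj a) (hconn : Connected a)
    (hlf : GraphLocallyFinite a) (hubd : UnifBoundedDegree a)
    (hns : NonSingular a)
    (f : l2 →L[ℝ] l2)
    (hf : ∀ v w p q : l2, IsRWProd a v w p → IsStarProd a (f v) (f w) q → f p = q) :
    f = 0 ∨ Function.Injective f := by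
  by_cases hex : ∃ i, f (delta i) = 0
  · left
    obtain ⟨i, hi⟩ := hex
    have hall : ∀ j, f (delta j) = 0 := fun j => by
      induction hconn i j with
      | refl => exact hi
      | tail _ h ih => exact map_delta_eq_zero_of_adj hadj hlf hubd hns f hf h ih
    ext1 v
    have hv := (lp.hasSum_single (p := 2) (by norm_num) v).mapL f
    have hterm : ∀ j, f (lp.single 2 j (v j)) = 0 := fun j => by
      have : (lp.single 2 j (v j) : l2) = v j • delta j := by
        rw [delta, ← lp.single_smul]
        simp
      rw [this, map_smul, hall, smul_zero]
    simp only [hterm] at hv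
    exact hv.unique hasSum_zero
  · right
    rw [injective_iff_map_eq_zero]
    intro v hv
    ext j
    by_contra hj
    exact hex ⟨j, map_delta_eq_zero_of_map_eq_zero hadj hlf hubd hns f hf v hv j hj⟩
end
end

section
/- Let G be a connected graph on ℕ with uniformly bounded degree which is non-singular (the bounded adjacency operator A on ℓ²(ℕ), (A v)_k = ∑_i a_{ki} v_i, has trivial kernel). Let f : ℓ²(ℕ) → ℓ²(ℕ) be a nonzero continuous linear map satisfying f(v ∘ w) = f(v) ⋆ f(w) for all v, w ∈ ℓ²(ℕ), and for each i ∈ ℕ set Ω_i = {k ∈ ℕ : ⟨f(δ_i), δ_k⟩ ≠ 0}. Then the family {Ω_i}_{i∈ℕ} is a partition of ℕ: the sets Ω_i are nonempty, pairwise disjoint, and their union is all of ℕ. -/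
/-!
Write `A` for the adjacency operator. Products of two `ℓ²` sequences are summable, and the columns
of `a` have uniformly bounded `ℓ²` norm, so `v ⋆ w = A (v w)` always exists in `ℓ²`
(`exists_starProd`) and the homomorphism property of `f` can be used for all pairs.

* Disjointness: `δ_i ∘ δ_j = 0` for `i ≠ j`, hence `A (f δ_i · f δ_j) = 0`, and non-singularity
  makes the pointwise product `f δ_i · f δ_j` vanish.
* Evaluating `f (δ_i ∘ δ_i) = f δ_i ⋆ f δ_i` gives
  `∑_k a_{ki} (f δ_k)_m = deg(i) ∑_j a_{mj} (f δ_i)_j²` (`hasSum_column`).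
* Nonemptiness: if `f δ_i = 0`, the right side vanishes; since the supports are disjoint, at most
  one term on the left is nonzero for each `m`, so `f δ_k = 0` for all neighbours `k` of `i`.
  Connectedness then gives `f = 0`.
* Covering: if `m` lies in no support, the left side vanishes for every `i`, so every
  neighbour of `m` lies in no support either. Connectedness again gives `f = 0`.
-/

noncomputable section
open scoped ENNReal

/-- The `i`-th column of a 0/1 matrix lies in `ℓ²`; its squared norm is its sum, as `x ^ 2 = x`
for the entries. -/
lemma exists_column (a : ℕ → ℕ → ℝ) (hadj : SimpleAdj a) (hlf : GraphLocallyFinite a) (i : ℕ) :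
    ∃ c : l2, (∀ k, c k = a k i) ∧ ‖c‖ ^ 2 = deg a i := by
  have hsq : ∀ k, ‖a k i‖ ^ (2 : ℝ≥0∞).toReal = a k i := by
    intro k
    rcases hadj.1 k i with h | h <;> simp [h]
  have hmem : Memℓp (fun k => a k i) (2 : ℝ≥0∞) := by
    apply memℓp_gen
    simpa only [hsq] using hlf i
  refine ⟨⟨fun k => a k i, hmem⟩, fun k => rfl, ?_⟩
  have h := lp.norm_rpow_eq_tsum (p := 2) (by simp) (⟨fun k => a k i, hmem⟩ : l2)
  have h2 : (∑' k, ‖a k i‖ ^ (2 : ℝ≥0∞).toReal) = deg a i := by simp only [hsq]; rfl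
  rw [← h2, ← h]
  simp

lemma summable_mul_l2 (v w : l2) : Summable fun i => |v i * w i| := by
  have hv : ∀ u : l2, Summable fun i => u i ^ 2 := by
    intro u
    have := (lp.memℓp u).summable (by simp)
    simpa using this
  refine Summable.of_nonneg_of_le (fun _ => abs_nonneg _) (fun i => ?_) ((hv v).add (hv w))
  rw [abs_le]
  constructor <;> nlinarith [sq_nonneg (v i + w i), sq_nonneg (v i - w i), sq_nonneg (v i),
    sq_nonneg (w i)]

/-- Coordinates are continuous on `ℓ²`. -/
lemma hasSum_coord {g : ℕ → l2} {s : l2} (h : HasSum g s) (m : ℕ) :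
    HasSum (fun i => g i m) (s m) :=
  h.mapL (lp.evalCLM ℝ (fun _ : ℕ => ℝ) 2 m)

/-- The product `v ⋆ w` exists in `ℓ²`: it is the absolutely convergent sum of the columns of `a`
with coefficients `v i * w i`. -/
lemma exists_starProd (a : ℕ → ℕ → ℝ) (hadj : SimpleAdj a) (hlf : GraphLocallyFinite a)
    (hubd : UnifBoundedDegree a) (v w : l2) : ∃ q, IsStarProd a v w q := by
  obtain ⟨M, hM, hdeg⟩ := hubd
  choose c hc hcn using exists_column a hadj hlf
  have hs : Summable fun i => (v i * w i) • c i := by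
    refine Summable.of_norm_bounded ((summable_mul_l2 v w).mul_right (M + 1)) fun i => ?_
    rw [norm_smul, Real.norm_eq_abs]
    gcongr
    nlinarith [hcn i, hdeg i, norm_nonneg (c i), sq_nonneg (‖c i‖ - 1)]
  have hk : ∀ k, HasSum (fun i => v i * w i * a k i) ((∑' i, (v i * w i) • c i : l2) k) := by
    intro k
    simpa [hc] using hasSum_coord hs.hasSum k
  exact ⟨_, fun k => (hk k).summable, fun k => (hk k).tsum_eq.symm⟩

lemma delta_apply (i j : ℕ) : delta i j = if j = i then 1 else 0 := by
  simp [delta, lp.single_apply, Pi.single_apply]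

lemma hasSum_map (f : l2 →L[ℝ] l2) (v : l2) (m : ℕ) :
    HasSum (fun k => v k * f (delta k) m) (f v m) := by
  have h := hasSum_coord ((lp.hasSum_single (p := 2) (by simp) v).mapL f) m
  have hd : ∀ k, lp.single 2 k (v k) = v k • delta k := by
    intro k
    rw [delta, ← lp.single_smul]
    simp
  simpa [hd] using h

lemma eq_zero_of_delta (f : l2 →L[ℝ] l2) (h : ∀ i m, f (delta i) m = 0) : f = 0 := by
  ext v m
  have := hasSum_map f v m
  simp only [h, mul_zero] at this
  simpa using this.unique hasSum_zero

/-- The identity `f (δ_i ∘ δ_i) = f δ_i ⋆ f δ_i`, scaled by `deg i` and read at coordinate `m`. -/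
lemma hasSum_column (a : ℕ → ℕ → ℝ) (hadj : SimpleAdj a)
    (hlf : GraphLocallyFinite a) (hubd : UnifBoundedDegree a) (f : l2 →L[ℝ] l2)
    (hf : ∀ v w p q : l2, IsRWProd a v w p → IsStarProd a (f v) (f w) q → f p = q)
    (i m : ℕ) (hi : deg a i ≠ 0) :
    ∃ s, HasSum (fun j => f (delta i) j * f (delta i) j * a m j) s ∧
      HasSum (fun k => a k i * f (delta k) m) (deg a i * s) := by
  obtain ⟨c, hc, -⟩ := exists_column a hadj hlf i
  obtain ⟨q, hq⟩ := exists_starProd a hadj hlf hubd (f (delta i)) (f (delta i))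
  have hp : IsRWProd a (delta i) (delta i) ((deg a i)⁻¹ • c) := by
    have hk : ∀ k, HasSum (fun j => delta i j * delta i j * (a k j / deg a j))
        (((deg a i)⁻¹ • c : l2) k) := by
      intro k
      convert hasSum_single i ?_ using 1
      · simp [delta_apply, hc]; ring
      · intro j hj
        simp [delta_apply, hj]
    exact ⟨fun k => (hk k).summable, fun k => (hk k).tsum_eq.symm⟩
  have h := hf _ _ _ _ hp hq
  have hfc : f c = deg a i • q := by
    rw [← h, map_smul, smul_smul, mul_inv_cancel₀ hi, one_smul]
  refine ⟨q m, ?_, ?_⟩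
  · rw [hq.2 m]
    exact (hq.1 m).hasSum
  · have := hasSum_map f c m
    rw [hfc] at this
    simpa [hc] using this

lemma disjoint_supports (a : ℕ → ℕ → ℝ) (hadj : SimpleAdj a)
    (hlf : GraphLocallyFinite a) (hubd : UnifBoundedDegree a) (hns : NonSingular a)
    (f : l2 →L[ℝ] l2)
    (hf : ∀ v w p q : l2, IsRWProd a v w p → IsStarProd a (f v) (f w) q → f p = q)
    (i j : ℕ) (hij : i ≠ j) (m : ℕ) : f (delta i) m * f (delta j) m = 0 := by
  obtain ⟨q, hq⟩ := exists_starProd a hadj hlf hubd (f (delta i)) (f (delta j))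
  have hz : ∀ k, delta i k * delta j k = 0 := by
    intro k
    by_cases h : k = i
    · subst h; simp [delta_apply, hij]
    · simp [delta_apply, h]
  have hp : IsRWProd a (delta i) (delta j) 0 := by
    refine ⟨fun k => ?_, fun k => ?_⟩ <;> simp [hz, summable_zero]
  have hq0 : q = 0 := by rw [← hf _ _ _ _ hp hq, map_zero]
  have hmem : Memℓp (fun k => f (delta i) k * f (delta j) k) (2 : ℝ≥0∞) := by
    have h1 : Memℓp (fun k => f (delta i) k * f (delta j) k) (1 : ℝ≥0∞) := by
      apply memℓp_gen
      simpa using summable_mul_l2 (f (delta i)) (f (delta j))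
    exact h1.of_exponent_ge (by norm_num)
  have h0 := hns ⟨_, hmem⟩ fun k => by
    have := hq.2 k
    rw [hq0] at this
    simpa [mul_comm] using this.symm
  have := congrArg (fun u : l2 => u m) h0
  simpa using this

/-- for a connected non-singular graph with uniformly bounded degree and a
nonzero continuous homomorphism `f` of Hilbert evolution algebras from `A_RW(G)` to
`A(G)`, the supports `Ω_i = {k : ⟨f(δ_i), δ_k⟩ ≠ 0}` form a partition of ℕ: they are
nonempty, pairwise disjoint, and cover ℕ. -/
theorem supports_form_partition
    (a : ℕ → ℕ → ℝ)
    (hadj : SimpleAdj a) (hconn : Connected a)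
    (hlf : GraphLocallyFinite a) (hubd : UnifBoundedDegree a)
    (hns : NonSingular a)
    (f : l2 →L[ℝ] l2) (hf0 : f ≠ 0)
    (hf : ∀ v w p q : l2, IsRWProd a v w p → IsStarProd a (f v) (f w) q → f p = q) :
    (∀ i : ℕ, {k : ℕ | f (delta i) k ≠ 0}.Nonempty) ∧
    (∀ i j : ℕ, i ≠ j →
      Disjoint {k : ℕ | f (delta i) k ≠ 0} {k : ℕ | f (delta j) k ≠ 0}) ∧
    (⋃ i : ℕ, {k : ℕ | f (delta i) k ≠ 0}) = Set.univ := by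
  have hdisj := disjoint_supports a hadj hlf hubd hns f hf
  have hcol := hasSum_column a hadj hlf hubd f hf
  have hnn : ∀ k i, 0 ≤ a k i := fun k i => by rcases hadj.1 k i with h | h <;> simp [h]
  have hdeg : ∀ k i, a k i = 1 → deg a i ≠ 0 := by
    intro k i h
    have : a k i ≤ deg a i := (hlf i).le_tsum k fun j _ => hnn j i
    linarith
  refine ⟨fun i => ?_, fun i j hij => ?_, ?_⟩
  · by_contra hne
    have hi : ∀ m, f (delta i) m = 0 := by
      intro m
      by_contra h
      exact hne ⟨m, h⟩
    refine hf0 (eq_zero_of_delta f fun j => ?_)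
    induction hconn i j with
    | refl => exact hi
    | @tail x k _ hxk ih =>
      intro m
      by_contra hkm
      obtain ⟨s, hs, hs'⟩ := hcol x m (hdeg k x (by rw [hadj.2.1, hxk]))
      have hs0 : s = 0 := by
        simp only [ih, zero_mul] at hs
        exact hs.unique hasSum_zero
      -- by disjointness, `k` contributes the only nonzero term at coordinate `m`
      have h1 := hasSum_single (f := fun k' => a k' x * f (delta k') m) k fun k' hk' => by
        have := (mul_eq_zero.mp (hdisj k' k hk' m)).resolve_right hkm
        simp [this]
      have h2 := hs'.unique h1
      rw [hs0, hadj.2.1 k x, hxk] at h2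
      exact hkm (by linarith)
  · rw [Set.disjoint_left]
    intro m hm hm'
    exact (mul_ne_zero hm hm') (hdisj i j hij m)
  · by_contra hne
    obtain ⟨m, hm⟩ := (Set.ne_univ_iff_exists_notMem _).mp hne
    have hm0 : ∀ i, f (delta i) m = 0 := by simpa using hm
    suffices h : ∀ n i, f (delta i) n = 0 from hf0 (eq_zero_of_delta f fun i n => h n i)
    intro n
    induction hconn m n with
    | refl => exact hm0
    | @tail x n _ hxn ih =>
      intro i
      -- the vertex `i` has positive degree: it has a neighbour, as the graph is connected
      have hi : deg a i ≠ 0 := by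
        rcases (hconn i (i + 1)).cases_head with h | ⟨y, hy, -⟩
        · omega
        · exact hdeg y i (by rw [hadj.2.1, hy])
      obtain ⟨s, hs, hs'⟩ := hcol i x hi
      have hs0 : s = 0 := by
        simp only [ih, mul_zero] at hs'
        exact (mul_eq_zero.mp (hs'.unique hasSum_zero)).resolve_left hi
      rw [hs0, hasSum_zero_iff_of_nonneg fun j =>
        mul_nonneg (mul_self_nonneg _) (hnn x j)] at hs
      have := congrFun hs n
      simpa [hxn] using this
end
end
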